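/- Let P_i and P_j be positive integers, let hp = lcm(P_i, P_j), a = hp/P_i, and b = hp/P_j. Let o_i, o_j, α_i, α_j be real numbers with 0 ≤ o_i, α_i > 0, o_i + α_i ≤ P_i, and 0 ≤ o_j, α_j > 0, o_j + α_j ≤ P_j. Then the following are equivalent: (1) there exist nonnegative integers m, n such that [o_i + m·P_i, o_i + α_i + m·P_i) ∩ [o_j + n·P_j, o_j + α_j + n·P_j) ≠ ∅; (2) there exist integers m, n with 0 ≤ m < a and 0 ≤ n < b such that [o_i + m·P_i, o_i + α_i + m·P_i) ∩ [o_j + n·P_j, o_j + α_j + n·P_j) ≠ ∅. In other words, to detect a resource sharing conflict between two periodic tasks whose executions fit within their own periods, it suffices to examine all period instances within one hyper period. -/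

import Mathlib

/-!
If `x` lies in both execution intervals, of period instances `m` and `n`, then, since each execution
fits inside its own period, `x` lies in `[m * P_i, (m + 1) * P_i)` and in `[n * P_j, (n + 1) * P_j)`.
A hyper period `[q * hp, (q + 1) * hp)` is a union of whole periods of either task, so the hyper
period containing `x` has index `q = m / a` and also `q = n / b` (`instance_div_hyperperiod`).
Translating everything by `-q * hp` replaces `m, n` by `m % a, n % b`
(`mem_execution_mod`), which lie in the required ranges.
-/

/-- A time at which the `m`-th instance runs belongs to the hyper period with index `m / a`,
where a hyper period `H` consists of `a` periods. -/
lemma instance_div_hyperperiod {P a H m : ℕ} (ha : 0 < a) (hH : a * P = H) {o α x : ℝ}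
    (ho : 0 ≤ o) (hoα : o + α ≤ P) (hx : x ∈ Set.Ico (o + m * P) (o + α + m * P)) :
    ((m / a : ℕ) : ℝ) * H ≤ x ∧ x < ((m / a : ℕ) + 1 : ℝ) * H := by
  obtain ⟨h1, h2⟩ := hx
  have lo : m / a * H ≤ m * P := by
    rw [← hH, ← mul_assoc]
    exact Nat.mul_le_mul_right _ (Nat.div_mul_le_self m a)
  have hi : (m + 1) * P ≤ (m / a + 1) * H := by
    rw [← hH, ← mul_assoc]
    refine Nat.mul_le_mul_right _ ?_
    have := Nat.lt_div_mul_add (a := m) ha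
    rw [add_mul, one_mul]
    exact this
  have lo' : ((m / a : ℕ) : ℝ) * H ≤ m * P := by exact_mod_cast lo
  have hi' : ((m : ℝ) + 1) * P ≤ ((m / a : ℕ) + 1 : ℝ) * H := by exact_mod_cast hi
  constructor <;> linarith

/-- Execution intervals are invariant under translation by whole hyper periods. -/
lemma mem_execution_mod {P a H m : ℕ} (hH : a * P = H) {o α x : ℝ}
    (hx : x ∈ Set.Ico (o + m * P) (o + α + m * P)) :
    x - ((m / a : ℕ) : ℝ) * H ∈
      Set.Ico (o + (m % a : ℕ) * P) (o + α + (m % a : ℕ) * P) := by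
  obtain ⟨h1, h2⟩ := hx
  have key : (m : ℝ) * P = (m % a : ℕ) * P + (m / a : ℕ) * H := by
    have : m * P = m % a * P + m / a * H := by
      rw [← hH]
      conv_lhs => rw [← Nat.mod_add_div m a]
      ring
    exact_mod_cast this
  constructor <;> linarith

/-- Hyper-period reduction: two periodic tasks whose executions fit within
their own (integer) periods have conflicting execution intervals for some
nonnegative integers `m, n` iff they have conflicting execution intervals for
some `m < hp/P_i` and `n < hp/P_j`, where `hp = lcm(P_i, P_j)`. -/
theorem conflict_iff_conflict_within_hyperperiod
    (P_i P_j : ℕ) (hPi : 0 < P_i) (hPj : 0 < P_j)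
    (o_i o_j α_i α_j : ℝ)
    (hoi : 0 ≤ o_i) (hαi : 0 < α_i) (hi : o_i + α_i ≤ (P_i : ℝ))
    (hoj : 0 ≤ o_j) (hαj : 0 < α_j) (hj : o_j + α_j ≤ (P_j : ℝ)) :
    (∃ m n : ℕ,
      (Set.Ico (o_i + m * P_i) (o_i + α_i + m * P_i) ∩
        Set.Ico (o_j + n * P_j) (o_j + α_j + n * P_j)).Nonempty) ↔
    (∃ m n : ℕ, m < Nat.lcm P_i P_j / P_i ∧ n < Nat.lcm P_i P_j / P_j ∧
      (Set.Ico (o_i + m * P_i) (o_i + α_i + m * P_i) ∩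
        Set.Ico (o_j + n * P_j) (o_j + α_j + n * P_j)).Nonempty) := by
  constructor
  · rintro ⟨m, n, x, hxi, hxj⟩
    have hHi := Nat.div_mul_cancel (Nat.dvd_lcm_left P_i P_j)
    have hHj := Nat.div_mul_cancel (Nat.dvd_lcm_right P_i P_j)
    have hH : 0 < Nat.lcm P_i P_j := Nat.lcm_pos hPi hPj
    have ha := Nat.div_pos (Nat.le_of_dvd hH (Nat.dvd_lcm_left P_i P_j)) hPi
    have hb := Nat.div_pos (Nat.le_of_dvd hH (Nat.dvd_lcm_right P_i P_j)) hPj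
    obtain ⟨i1, i2⟩ := instance_div_hyperperiod ha hHi hoi hi hxi
    obtain ⟨j1, j2⟩ := instance_div_hyperperiod hb hHj hoj hj hxj
    have mi := mem_execution_mod hHi hxi
    have mj := mem_execution_mod hHj hxj
    have hH' : (0 : ℝ) ≤ Nat.lcm P_i P_j := Nat.cast_nonneg _
    -- Both indices name the hyper period containing `x`.
    have hq : m / (Nat.lcm P_i P_j / P_i) = n / (Nat.lcm P_i P_j / P_j) := by
      have l1 := lt_of_mul_lt_mul_right (i1.trans_lt j2) hH'
      have l2 := lt_of_mul_lt_mul_right (j1.trans_lt i2) hH'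
      norm_cast at l1 l2
      omega
    rw [hq] at mi
    exact ⟨_, _, Nat.mod_lt m ha, Nat.mod_lt n hb, _, mi, mj⟩
  · rintro ⟨m, n, -, -, h⟩
    exact ⟨m, n, h⟩
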